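/- Let p be a prime and f: Q → P a p-quasi-saturated homomorphism of integral monoids such that P is saturated and sharp (its only unit is 0). Then every x ∈ P^gp such that p·x lies in the image of f^gp: Q^gp → P^gp itself lies in the image of Q^gp; consequently, P^gp/Q^gp has no p-torsion. -/

import Mathlib

/-!
If `p • x = φ q`, then `p • x + φ (-q) = 0` lies in `P`, so quasi-saturation provides `y` with
`x + φ y ∈ P` and `-q - p • y ∈ Q`. Applying `φ` to the latter gives `-(p • (x + φ y)) ∈ P`, and
saturation makes `x + φ y` a unit of `P`. Hence the `p`-torsion of `P^gp/Q^gp` is represented by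
units of `P`, and it vanishes when `P` is sharp.
-/

theorem mem_addSubgroupClosure_iff_exists_sub {G : Type*} [AddCommGroup G] (M : AddSubmonoid G)
    {x : G} : x ∈ AddSubgroup.closure (M : Set G) ↔ ∃ a ∈ M, ∃ b ∈ M, a - b = x := by
  rw [← AddSubgroup.mem_toAddSubmonoid, AddSubgroup.closure_toAddSubmonoid,
    AddSubmonoid.closure_union, AddSubmonoid.closure_neg, AddSubmonoid.closure_eq,
    AddSubmonoid.mem_sup]
  refine exists_congr fun a => and_congr_right fun _ => ?_
  rw [neg_surjective.exists]
  simp only [AddSubmonoid.mem_neg, neg_neg, sub_eq_add_neg]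

theorem forall_quotient_nsmul_eq_zero_imp_iff {G : Type*} [AddCommGroup G] (H : AddSubgroup G)
    (n : ℕ) : (∀ y : G ⧸ H, n • y = 0 → y = 0) ↔ ∀ x : G, n • x ∈ H → x ∈ H := by
  simp only [(QuotientAddGroup.mk_surjective (s := H)).forall, ← QuotientAddGroup.mk_nsmul,
    QuotientAddGroup.eq_zero_iff]

section QuasiSaturated

variable {GQ GP : Type*} [AddCommGroup GQ] [AddCommGroup GP]

/-- The `p`-quasi-saturation condition on a homomorphism of integral monoids `Q → P`. The monoids
are encoded as submonoids of ambient groups, meant to be their group completions, and the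
homomorphism by its extension `φ` to these groups; that `φ` maps `Q` into `P` is not part of the
condition. -/
def IsQuasiSaturated (p : ℕ) (Q : AddSubmonoid GQ) (P : AddSubmonoid GP) (φ : GQ →+ GP) : Prop :=
  ∀ r₁ ∈ P, ∀ r₂ ∈ P, ∀ q₁ ∈ Q, ∀ q₂ ∈ Q,
    p • (r₁ - r₂) + φ (q₁ - q₂) ∈ P →
    ∃ x : GQ, (r₁ - r₂) + φ x ∈ P ∧ (q₁ - q₂) - p • x ∈ Q

namespace IsQuasiSaturated

variable {p : ℕ} {Q : AddSubmonoid GQ} {P : AddSubmonoid GP} {φ : GQ →+ GP}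

theorem exists_add_map_mem (h : IsQuasiSaturated p Q P φ) {g : GP} {q : GQ}
    (hg : g ∈ AddSubgroup.closure (P : Set GP)) (hq : q ∈ AddSubgroup.closure (Q : Set GQ))
    (hgq : p • g + φ q ∈ P) : ∃ x : GQ, g + φ x ∈ P ∧ q - p • x ∈ Q := by
  obtain ⟨r₁, hr₁, r₂, hr₂, rfl⟩ := (mem_addSubgroupClosure_iff_exists_sub P).1 hg
  obtain ⟨q₁, hq₁, q₂, hq₂, rfl⟩ := (mem_addSubgroupClosure_iff_exists_sub Q).1 hq
  exact h r₁ hr₁ r₂ hr₂ q₁ hq₁ q₂ hq₂ hgq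

theorem exists_add_map_mem_support (h : IsQuasiSaturated p Q P φ) (hmap : ∀ q ∈ Q, φ q ∈ P)
    (hPsat : ∀ g : GP, p • g ∈ P → g ∈ P) {x : GP} {q : GQ}
    (hx : x ∈ AddSubgroup.closure (P : Set GP)) (hq : q ∈ AddSubgroup.closure (Q : Set GQ))
    (hxq : p • x = φ q) : ∃ y : GQ, x + φ y ∈ P.support := by
  have hzero : p • x + φ (-q) = 0 := by rw [hxq, map_neg, add_neg_cancel]
  obtain ⟨y, hxy, hqy⟩ := h.exists_add_map_mem hx (neg_mem hq) (hzero ▸ P.zero_mem)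
  have hφ : φ (-q - p • y) = p • -(x + φ y) := by
    rw [map_sub, map_neg, map_nsmul, ← hxq, smul_neg, smul_add, neg_add']
  exact ⟨y, hxy, hPsat _ (hφ ▸ hmap _ hqy)⟩

end IsQuasiSaturated

theorem noPTorsion_of_quasiSaturated_general {p : ℕ} {Q : AddSubmonoid GQ} {P : AddSubmonoid GP}
    {φ : GQ →+ GP} (hmap : ∀ q ∈ Q, φ q ∈ P)
    (hQGen : AddSubgroup.closure (Q : Set GQ) = ⊤) (hPGen : AddSubgroup.closure (P : Set GP) = ⊤)
    (hpqs : IsQuasiSaturated p Q P φ) (hPsat : ∀ g : GP, p • g ∈ P → g ∈ P)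
    (hunits : ∀ u ∈ P.support, p • u ∈ φ.range → u ∈ φ.range) :
    (∀ x : GP, p • x ∈ φ.range → x ∈ φ.range) ∧ (∀ y : GP ⧸ φ.range, p • y = 0 → y = 0) := by
  rw [forall_quotient_nsmul_eq_zero_imp_iff, and_self]
  rintro x ⟨q, hq⟩
  obtain ⟨y, hy⟩ := hpqs.exists_add_map_mem_support hmap hPsat
    (hPGen ▸ AddSubgroup.mem_top x) (hQGen ▸ AddSubgroup.mem_top q) hq.symm
  have hpxy : p • (x + φ y) ∈ φ.range := ⟨q + p • y, by rw [map_add, map_nsmul, hq, smul_add]⟩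
  exact (add_mem_cancel_right (AddMonoidHom.mem_range.2 ⟨y, rfl⟩)).1 (hunits _ hy hpxy)

end QuasiSaturated

/-- Let `p` be a prime and `f : Q → P` a `p`-quasi-saturated
homomorphism of integral monoids such that `P` is saturated and sharp (its only
unit is `0`).  (Monoids are modelled as additive submonoids of the abelian groups
`GQ = Q^gp`, `GP = P^gp` they generate, `f` being the restriction of
`φ = f^gp : GQ →+ GP`.)  Then every `x ∈ P^gp` with `p • x` in the image of
`f^gp : Q^gp → P^gp` lies itself in the image of `Q^gp`; consequently
`P^gp/Q^gp` has no `p`-torsion. -/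
theorem noPTorsion_of_quasiSaturated
    (p : ℕ) (hp : p.Prime)
    {GQ GP : Type*} [AddCommGroup GQ] [AddCommGroup GP]
    (Q : AddSubmonoid GQ) (P : AddSubmonoid GP)
    (φ : GQ →+ GP) (hmap : ∀ x ∈ Q, φ x ∈ P)
    (hQGen : AddSubgroup.closure (Q : Set GQ) = ⊤)
    (hPGen : AddSubgroup.closure (P : Set GP) = ⊤)
    (hpqs : ∀ r₁ ∈ P, ∀ r₂ ∈ P, ∀ q₁ ∈ Q, ∀ q₂ ∈ Q,
        p • (r₁ - r₂) + φ (q₁ - q₂) ∈ P →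
        ∃ x : GQ, (r₁ - r₂) + φ x ∈ P ∧ (q₁ - q₂) - p • x ∈ Q)
    (hPsat : ∀ g : GP, ∀ n : ℕ, 0 < n → n • g ∈ P → g ∈ P)
    (hsharp : ∀ x ∈ P, -x ∈ P → x = 0) :
    (∀ x : GP, p • x ∈ AddMonoidHom.range φ → x ∈ AddMonoidHom.range φ) ∧
    (∀ y : GP ⧸ AddMonoidHom.range φ, p • y = 0 → y = 0) := by
  exact noPTorsion_of_quasiSaturated_general hmap hQGen hPGen hpqs (fun g => hPsat g p hp.pos)
    fun u hu _ => hsharp u hu.1 hu.2 ▸ zero_mem _
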